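/- arXiv:1909.09744 — 2 statements merged into one kernel-verified Lean document; each statement's English description precedes it below -/
import Mathlib

section
/- Let (𝒟^-, 𝒟^+, ζ) be a random vector with 𝒟^-, 𝒟^+ ∈ ℕ, |ζ| ≤ 1 almost surely, and 0 < E[𝒟^+] < ∞. Suppose P(𝒟^- > x) ∈ RV(−α) for some α > 1, and P(𝒟^- /(𝒟^+ ∨ 1) > x) = o(P(𝒟^- > x)) as x → ∞. Then E[1(ζ·𝒟^- /(𝒟^+ ∨ 1) > x)·𝒟^+] = o(E[𝒟^+]·P(𝒟^- > x)) as x → ∞; that is, for the size-biased vector (𝒩, 𝒞) with P(𝒩·𝒞 > x) = E[1(ζ·𝒟^- /(𝒟^+ ∨ 1) > x)·𝒟^+]/E[𝒟^+] arising from the directed configuration model, P(𝒞·𝒩 > x) = o(P(𝒩₀ > x)) where 𝒩₀ has the distribution of 𝒟^-. -/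
open MeasureTheory ProbabilityTheory Filter Asymptotics Set

/-- The (real-valued) tail probability `P(X > x)`. -/
noncomputable def tailP {Ω : Type*} [MeasurableSpace Ω] (μ : Measure Ω) (X : Ω → ℝ) (x : ℝ) : ℝ :=
  (μ {ω | X ω > x}).toReal

/-- `f` is a regularly varying tail with index `-α`. -/
def RVtail (f : ℝ → ℝ) (α : ℝ) : Prop :=
  ∀ lam : ℝ, 0 < lam →
    Tendsto (fun x => f (lam * x) / f x) atTop (nhds (lam ^ (-α)))

lemma tailP_nonneg {Ω : Type*} [MeasurableSpace Ω] (μ : Measure Ω) (X : Ω → ℝ) (x : ℝ) :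
    0 ≤ tailP μ X x := ENNReal.toReal_nonneg

lemma ofReal_tailP {Ω : Type*} [MeasurableSpace Ω] (μ : Measure Ω) [IsFiniteMeasure μ]
    (X : Ω → ℝ) (x : ℝ) : ENNReal.ofReal (tailP μ X x) = μ {ω | X ω > x} :=
  ENNReal.ofReal_toReal (measure_ne_top _ _)

/-- A regularly varying tail of index below `-1` decays geometrically along dyadic scales, with a
ratio strictly smaller than `1 / 2`. -/
lemma RVtail.exists_dyadic_decay {f : ℝ → ℝ} {α : ℝ} (hf : RVtail f α) (hα : 1 < α)
    (hf0 : ∀ x, 0 ≤ f x) :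
    ∃ q : ℝ, 0 < q ∧ q < 1 ∧ ∃ x₀ : ℝ, ∀ x, x₀ ≤ x → ∀ j : ℕ,
      2 ^ j * f (2 ^ j * x) ≤ q ^ j * f x := by
  have hlt : (2 : ℝ) ^ (-α) < 1 / 2 := by
    have := Real.rpow_lt_rpow_of_exponent_lt (x := (2 : ℝ)) (by norm_num) (neg_lt_neg hα)
    rwa [Real.rpow_neg_one, ← one_div] at this
  obtain ⟨r, hr1, hr2⟩ := exists_between hlt
  have hr0 : 0 < r := lt_trans (by positivity) hr1
  have hpos : ∀ᶠ x in atTop, f (1 * x) / f x ≠ 0 :=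
    (hf 1 one_pos).eventually_ne (by simp)
  have hev : ∀ᶠ x in atTop, f (2 * x) / f x < r :=
    (hf 2 two_pos).eventually_lt_const hr1
  obtain ⟨x₀, hx₀⟩ := eventually_atTop.1 (hpos.and hev)
  refine ⟨2 * r, by positivity, by linarith, max x₀ 0, fun x hx j => ?_⟩
  have hx1 : x₀ ≤ x := (le_max_left _ _).trans hx
  have hx2 : 0 ≤ x := (le_max_right _ _).trans hx
  induction j with
  | zero => simp
  | succ j ih =>
    have hle : x₀ ≤ 2 ^ j * x :=
      hx1.trans (le_mul_of_one_le_left hx2 (one_le_pow₀ one_le_two))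
    obtain ⟨hne, hlt⟩ := hx₀ _ hle
    have hfpos : 0 < f (2 ^ j * x) :=
      lt_of_le_of_ne (hf0 _) fun h => hne (by simp [← h])
    rw [div_lt_iff₀ hfpos] at hlt
    calc 2 ^ (j + 1) * f (2 ^ (j + 1) * x) = 2 ^ (j + 1) * f (2 * (2 ^ j * x)) := by
          congr 2; ring
      _ ≤ 2 ^ (j + 1) * (r * f (2 ^ j * x)) := by gcongr
      _ = 2 * r * (2 ^ j * f (2 ^ j * x)) := by ring
      _ ≤ 2 * r * ((2 * r) ^ j * f x) := by gcongr
      _ = (2 * r) ^ (j + 1) * f x := by ring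

/-- Dyadic decomposition of the weight `Dp` on the event `Dm / (Dp ∨ 1) > x`. -/
lemma ofReal_le_dyadic_indicators {Ω : Type*} (Dm Dp : Ω → ℕ) (ω : Ω) {x : ℝ} (hx : 0 ≤ x) (m : ℕ)
    (h : (Dm ω : ℝ) / ((max (Dp ω) 1 : ℕ) : ℝ) > x) :
    ENNReal.ofReal (Dp ω : ℝ) ≤
      Set.indicator {ω' | (Dm ω' : ℝ) / ((max (Dp ω') 1 : ℕ) : ℝ) > x}
          (fun _ => ENNReal.ofReal (2 ^ m)) ω
        + ∑' j : ℕ, Set.indicator {ω' | (Dm ω' : ℝ) > 2 ^ (m + j) * x}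
          (fun _ => ENNReal.ofReal (2 ^ (m + j + 1))) ω := by
  rcases le_total (Dp ω) (2 ^ m) with hle | hle
  · refine le_add_right ?_
    rw [Set.indicator_of_mem
      (show ω ∈ {ω' | (Dm ω' : ℝ) / ((max (Dp ω') 1 : ℕ) : ℝ) > x} from h)]
    exact ENNReal.ofReal_le_ofReal (by exact_mod_cast hle)
  · refine le_add_left ?_
    have hD1 : 1 ≤ Dp ω := Nat.one_le_two_pow.trans hle
    obtain ⟨j, hj⟩ := Nat.exists_eq_add_of_le (Nat.le_log_of_pow_le one_lt_two hle)
    have hlow : 2 ^ (m + j) ≤ Dp ω := hj ▸ Nat.pow_log_le_self 2 (by omega)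
    have hup : Dp ω ≤ 2 ^ (m + j + 1) := hj ▸ (Nat.lt_pow_succ_log_self one_lt_two _).le
    rw [max_eq_left hD1, gt_iff_lt, lt_div_iff₀ (by exact_mod_cast hD1)] at h
    have hmem : ω ∈ {ω' | (Dm ω' : ℝ) > 2 ^ (m + j) * x} := by
      have hlow' : (2 : ℝ) ^ (m + j) ≤ Dp ω := by exact_mod_cast hlow
      calc (2 : ℝ) ^ (m + j) * x ≤ Dp ω * x := by gcongr
        _ = x * Dp ω := mul_comm _ _
        _ < Dm ω := h
    refine le_trans ?_ (ENNReal.le_tsum j)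
    rw [Set.indicator_of_mem hmem]
    exact ENNReal.ofReal_le_ofReal (by exact_mod_cast hup)

/-- The size-biased tail is controlled by the tail of the ratio, up to a remainder that is
geometrically small in the truncation level `m`. -/
lemma integral_size_biased_le {Ω : Type*} [MeasurableSpace Ω] (μ : Measure Ω)
    [IsFiniteMeasure μ] {Dm Dp : Ω → ℕ} {ζ : Ω → ℝ}
    (hDm : Measurable Dm) (hDp : Measurable Dp) (hζ : Measurable ζ)
    (hζbd : ∀ᵐ ω ∂μ, |ζ ω| ≤ 1) {q x : ℝ} (hq0 : 0 < q) (hq1 : q < 1) (hx : 0 ≤ x)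
    (hdecay : ∀ j : ℕ, 2 ^ j * tailP μ (fun ω => (Dm ω : ℝ)) (2 ^ j * x) ≤
      q ^ j * tailP μ (fun ω => (Dm ω : ℝ)) x) (m : ℕ) :
    ∫ ω, Set.indicator
        {ω' | ζ ω' * (Dm ω' : ℝ) / ((max (Dp ω') 1 : ℕ) : ℝ) > x}
        (fun ω' => (Dp ω' : ℝ)) ω ∂μ ≤
      2 ^ m * tailP μ (fun ω => (Dm ω : ℝ) / ((max (Dp ω) 1 : ℕ) : ℝ)) x
        + 2 * q ^ m * (1 - q)⁻¹ * tailP μ (fun ω => (Dm ω : ℝ)) x := by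
  have hDm' : Measurable fun ω => (Dm ω : ℝ) := measurable_from_nat.comp hDm
  have hDp' : Measurable fun ω => (Dp ω : ℝ) := measurable_from_nat.comp hDp
  have hmax : Measurable fun ω => ((max (Dp ω) 1 : ℕ) : ℝ) :=
    (measurable_from_nat (f := fun n : ℕ => ((max n 1 : ℕ) : ℝ))).comp hDp
  have hY : MeasurableSet {ω | (Dm ω : ℝ) / ((max (Dp ω) 1 : ℕ) : ℝ) > x} :=
    measurableSet_lt measurable_const (hDm'.div hmax)
  have hB : ∀ j : ℕ, MeasurableSet {ω | (Dm ω : ℝ) > 2 ^ (m + j) * x} := fun j =>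
    measurableSet_lt measurable_const hDm'
  have hA : MeasurableSet {ω | ζ ω * (Dm ω : ℝ) / ((max (Dp ω) 1 : ℕ) : ℝ) > x} :=
    measurableSet_lt measurable_const ((hζ.mul hDm').div hmax)
  have hF0 := tailP_nonneg μ (fun ω => (Dm ω : ℝ))
  have hY0 := tailP_nonneg μ (fun ω => (Dm ω : ℝ) / ((max (Dp ω) 1 : ℕ) : ℝ)) x
  have h1q : 0 < 1 - q := by linarith
  rw [integral_eq_lintegral_of_nonneg_ae
    (Eventually.of_forall fun ω => Set.indicator_nonneg (fun _ _ => Nat.cast_nonneg _) ω)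
    (hDp'.indicator hA).aestronglyMeasurable]
  have hR0 : 0 ≤ 2 * q ^ m * (1 - q)⁻¹ * tailP μ (fun ω => (Dm ω : ℝ)) x :=
    mul_nonneg (by positivity) (hF0 x)
  refine ENNReal.toReal_le_of_le_ofReal (add_nonneg (by positivity) hR0) ?_
  calc _ ≤ ∫⁻ ω, (Set.indicator {ω' | (Dm ω' : ℝ) / ((max (Dp ω') 1 : ℕ) : ℝ) > x}
          (fun _ => ENNReal.ofReal (2 ^ m)) ω
        + ∑' j : ℕ, Set.indicator {ω' | (Dm ω' : ℝ) > 2 ^ (m + j) * x}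
          (fun _ => ENNReal.ofReal (2 ^ (m + j + 1))) ω) ∂μ := by
        refine lintegral_mono_ae ?_
        filter_upwards [hζbd] with ω hω
        by_cases hmem : ω ∈ {ω | ζ ω * (Dm ω : ℝ) / ((max (Dp ω) 1 : ℕ) : ℝ) > x}
        · rw [Set.indicator_of_mem hmem]
          refine ofReal_le_dyadic_indicators Dm Dp ω hx m (lt_of_lt_of_le hmem ?_)
          gcongr
          exact mul_le_of_le_one_left (Nat.cast_nonneg _) (abs_le.1 hω).2
        · rw [Set.indicator_of_notMem hmem]
          simp
    _ = ENNReal.ofReal (2 ^ m * tailP μ (fun ω => (Dm ω : ℝ) / ((max (Dp ω) 1 : ℕ) : ℝ)) x)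
        + ∑' j : ℕ, ENNReal.ofReal
          (2 ^ (m + j + 1) * tailP μ (fun ω => (Dm ω : ℝ)) (2 ^ (m + j) * x)) := by
        rw [lintegral_add_left (measurable_const.indicator hY),
          lintegral_tsum fun j => (measurable_const.indicator (hB j)).aemeasurable,
          lintegral_indicator_const hY, ENNReal.ofReal_mul (by positivity), ofReal_tailP]
        congr 2
        funext j
        rw [lintegral_indicator_const (hB j), ENNReal.ofReal_mul (by positivity), ofReal_tailP]
    _ ≤ ENNReal.ofReal (2 ^ m * tailP μ (fun ω => (Dm ω : ℝ) / ((max (Dp ω) 1 : ℕ) : ℝ)) x)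
        + ∑' j : ℕ, ENNReal.ofReal
          (2 * q ^ m * tailP μ (fun ω => (Dm ω : ℝ)) x * q ^ j) := by
        refine add_le_add le_rfl (ENNReal.tsum_le_tsum fun j => ENNReal.ofReal_le_ofReal ?_)
        calc 2 ^ (m + j + 1) * tailP μ (fun ω => (Dm ω : ℝ)) (2 ^ (m + j) * x)
            = 2 * (2 ^ (m + j) * tailP μ (fun ω => (Dm ω : ℝ)) (2 ^ (m + j) * x)) := by ring
          _ ≤ 2 * (q ^ (m + j) * tailP μ (fun ω => (Dm ω : ℝ)) x) :=
            mul_le_mul_of_nonneg_left (hdecay (m + j)) two_pos.le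
          _ = _ := by ring
    _ = _ := by
        rw [ENNReal.ofReal_add (by positivity) hR0, ← ENNReal.ofReal_tsum_of_nonneg
          (fun j => mul_nonneg (mul_nonneg (by positivity) (hF0 x)) (by positivity))
          ((summable_geometric_of_lt_one hq0.le hq1).mul_left _), tsum_mul_left,
          tsum_geometric_of_lt_one hq0.le hq1]
        congr 2
        ring

/-- Example 4.4 of the paper, DCM, in-degree case: if
`P(𝒟⁻ > x) ∈ RV(−α)` and `P(𝒟⁻/(𝒟⁺ ∨ 1) > x) = o(P(𝒟⁻ > x))`, then the size-biased
tail of the directed configuration model satisfies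
`E[1(ζ 𝒟⁻/(𝒟⁺ ∨ 1) > x) 𝒟⁺] = o(E[𝒟⁺] P(𝒟⁻ > x))`, i.e. `P(𝒞𝒩 > x) = o(P(𝒩₀ > x))`. -/
theorem dcm_size_biased_NC_negligible
    {Ω : Type*} [MeasurableSpace Ω] (μ : Measure Ω) [IsProbabilityMeasure μ]
    (Dm Dp : Ω → ℕ) (ζ : Ω → ℝ)
    (hDm : Measurable Dm) (hDp : Measurable Dp) (hζ : Measurable ζ)
    (hζbd : ∀ᵐ ω ∂μ, |ζ ω| ≤ 1)
    (hDpInt : Integrable (fun ω => (Dp ω : ℝ)) μ)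
    (hDpPos : 0 < ∫ ω, (Dp ω : ℝ) ∂μ)
    (α : ℝ) (hα : 1 < α)
    (hRV : RVtail (tailP μ (fun ω => (Dm ω : ℝ))) α)
    (ho : (fun x => tailP μ (fun ω => (Dm ω : ℝ) / ((max (Dp ω) 1 : ℕ) : ℝ)) x)
      =o[atTop] fun x => tailP μ (fun ω => (Dm ω : ℝ)) x) :
    (fun x => ∫ ω, Set.indicator
        {ω' | ζ ω' * (Dm ω' : ℝ) / ((max (Dp ω') 1 : ℕ) : ℝ) > x}
        (fun ω' => (Dp ω' : ℝ)) ω ∂μ)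
      =o[atTop] fun x => (∫ ω, (Dp ω : ℝ) ∂μ) * tailP μ (fun ω => (Dm ω : ℝ)) x := by
  obtain ⟨q, hq0, hq1, x₀, hx₀⟩ := hRV.exists_dyadic_decay hα (tailP_nonneg μ _)
  have h1q : 0 < 1 - q := by linarith
  refine isLittleO_iff.2 fun c hc => ?_
  set E := ∫ ω, (Dp ω : ℝ) ∂μ
  have hlim : Tendsto (fun m : ℕ => 2 * q ^ m * (1 - q)⁻¹) atTop (nhds 0) := by
    simpa using ((tendsto_pow_atTop_nhds_zero_of_lt_one hq0.le hq1).const_mul 2).mul_const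
      (1 - q)⁻¹
  have hcE : 0 < c * E / 2 := by positivity
  obtain ⟨m, hm⟩ := (hlim.eventually_lt_const hcE).exists
  have hsmall : 0 < c * E / 2 / 2 ^ m := by positivity
  filter_upwards [isLittleO_iff.1 ho hsmall, eventually_ge_atTop x₀, eventually_ge_atTop 0]
    with x hxo hxx hx0
  have hF0 := tailP_nonneg μ (fun ω => (Dm ω : ℝ)) x
  rw [Real.norm_of_nonneg (tailP_nonneg μ _ x), Real.norm_of_nonneg hF0] at hxo
  rw [Real.norm_of_nonneg (mul_nonneg hDpPos.le hF0), Real.norm_of_nonneg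
    (integral_nonneg fun ω => Set.indicator_nonneg (fun _ _ => Nat.cast_nonneg _) ω)]
  refine (integral_size_biased_le μ hDm hDp hζ hζbd hq0 hq1 hx0 (hx₀ x hxx) m).trans ?_
  calc _ ≤ 2 ^ m * (c * E / 2 / 2 ^ m * tailP μ (fun ω => (Dm ω : ℝ)) x)
        + c * E / 2 * tailP μ (fun ω => (Dm ω : ℝ)) x := by gcongr
    _ = _ := by field_simp; ring
end

section
/- Let (W^-, W^+, ζ) be a random vector with W^-, W^+ ≥ 0 almost surely, 0 < E[W^-] < ∞, 0 < E[W^+] < ∞, and |ζ| ≤ c almost surely for some c ∈ (0,1]; set θ := E[W^- + W^+]. Let Z^- and Z^+ be ℕ-valued random variables that are conditionally independent given (W^-, W^+, ζ), with conditional distributions Poisson with means E[W^+]·W^- /θ and E[W^-]·W^+/θ, respectively. Then E[Z^- · (|ζ|/(Z^+ + 1)) · W^+] = (E[W^+]/E[W^-]) · E[|ζ|·W^-·(1 − e^{−E[W^-]·W^+/θ})] ≤ c·E[W^+]. In particular, for the size-biased vector (𝒩, 𝒞) of the inhomogeneous random digraph one has E[𝒩·|𝒞|] = E[Z^-·(|ζ|/(Z^++1))·W^+]/E[W^+]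 ≤ c. -/
open MeasureTheory ProbabilityTheory Filter Set

/-- Poisson probability mass function with (real) mean `lam`. -/
noncomputable def poissonPdf (lam : ℝ) (n : ℕ) : ℝ :=
  Real.exp (-lam) * lam ^ n / (n.factorial : ℝ)

lemma poissonPdf_nonneg {lam : ℝ} (h : 0 ≤ lam) (n : ℕ) : 0 ≤ poissonPdf lam n := by
  unfold poissonPdf; positivity

lemma poissonPdf_le_one {lam : ℝ} (h : 0 ≤ lam) (n : ℕ) : poissonPdf lam n ≤ 1 := by
  unfold poissonPdf
  rw [mul_div_assoc]
  calc Real.exp (-lam) * (lam ^ n / n.factorial)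
      ≤ Real.exp (-lam) * Real.exp lam := by
        gcongr
        exact Real.pow_div_factorial_le_exp lam h n
    _ = 1 := by rw [← Real.exp_add]; simp

lemma measurable_poissonPdf (n : ℕ) : Measurable fun lam => poissonPdf lam n := by
  unfold poissonPdf; fun_prop

lemma hasSum_poissonPdf (lam : ℝ) : HasSum (poissonPdf lam) 1 := by
  have h := (NormedSpace.expSeries_div_hasSum_exp (𝔸 := ℝ) lam).mul_left (Real.exp (-lam))
  rw [← Real.exp_eq_exp_ℝ, ← Real.exp_add, neg_add_cancel, Real.exp_zero] at h
  refine h.congr_fun fun n => ?_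
  rw [poissonPdf, mul_div_assoc]

lemma poissonPdf_succ_mul (lam : ℝ) (n : ℕ) :
    poissonPdf lam (n + 1) * ((n : ℝ) + 1) = lam * poissonPdf lam n := by
  unfold poissonPdf
  rw [Nat.factorial_succ]
  push_cast
  field_simp
  ring

/-- The mean of a Poisson variable. -/
lemma hasSum_poissonPdf_mul_id (lam : ℝ) :
    HasSum (fun n : ℕ => poissonPdf lam n * n) lam := by
  rw [← hasSum_nat_add_iff' 1]
  simpa [poissonPdf_succ_mul] using (hasSum_poissonPdf lam).mul_left lam

/-- The mean of `lam / (Z + 1)` for a Poisson variable `Z` of mean `lam`. -/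
lemma hasSum_poissonPdf_mul_div_succ (lam : ℝ) :
    HasSum (fun n : ℕ => poissonPdf lam n * (lam / ((n : ℝ) + 1))) (1 - Real.exp (-lam)) := by
  have h := (hasSum_nat_add_iff' 1).2 (hasSum_poissonPdf lam)
  have h0 : ∑ i ∈ Finset.range 1, poissonPdf lam i = Real.exp (-lam) := by simp [poissonPdf]
  rw [h0] at h
  refine h.congr_fun ?_
  intro n
  have := poissonPdf_succ_mul lam n
  have : (n : ℝ) + 1 ≠ 0 := by positivity
  field_simp
  linarith

/-- If `d` is a conditional density of the event `A` given `V`, then it can replace `A` in the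
integral of any nonnegative function of `V`. -/
lemma setLIntegral_comp_eq_of_condDensity {Ω α : Type*} [MeasurableSpace Ω] [MeasurableSpace α]
    {μ : Measure Ω} [IsFiniteMeasure μ] {V : Ω → α} (hV : Measurable V) {A : Set Ω}
    {d : Ω → ℝ} (hd : Measurable d) (hdi : Integrable d μ) (hd0 : 0 ≤ᵐ[μ] d)
    (h : ∀ s, MeasurableSet s → (μ (V ⁻¹' s ∩ A)).toReal = ∫ ω in V ⁻¹' s, d ω ∂μ)
    {g : α → ENNReal} (hg : Measurable g) :
    ∫⁻ ω in A, g (V ω) ∂μ = ∫⁻ ω, ENNReal.ofReal (d ω) * g (V ω) ∂μ := by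
  have key : (μ.restrict A).map V = (μ.withDensity fun ω => ENNReal.ofReal (d ω)).map V := by
    ext s hs
    rw [Measure.map_apply hV hs, Measure.map_apply hV hs, Measure.restrict_apply (hV hs),
      withDensity_apply _ (hV hs),
      ← ofReal_integral_eq_lintegral_ofReal hdi.integrableOn (ae_restrict_of_ae hd0),
      ← h s hs, ENNReal.ofReal_toReal (measure_ne_top _ _)]
  rw [← lintegral_map hg hV, key, lintegral_map hg hV]
  exact lintegral_withDensity_eq_lintegral_mul _ hd.ennreal_ofReal (hg.comp hV)

/-- Decomposition of an integral over the fibres of a discrete random variable. -/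
lemma lintegral_eq_tsum_fiber {Ω κ : Type*} [MeasurableSpace Ω] [Countable κ] [MeasurableSpace κ]
    [MeasurableSingletonClass κ] {μ : Measure Ω} {Z : Ω → κ} (hZ : Measurable Z)
    (F : κ → Ω → ENNReal) (hF : ∀ k, Measurable (F k)) :
    ∫⁻ ω, F (Z ω) ω ∂μ = ∑' k, ∫⁻ ω in Z ⁻¹' {k}, F k ω ∂μ := by
  have hm : ∀ k, MeasurableSet (Z ⁻¹' {k}) := fun k => hZ (measurableSet_singleton k)
  simp_rw [← lintegral_indicator (hm _)]
  rw [← lintegral_tsum fun k => ((hF k).indicator (hm k)).aemeasurable]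
  refine lintegral_congr fun ω => ?_
  rw [tsum_eq_single (Z ω)]
  · simp
  · intro k hk
    simp [hk.symm]

lemma tsum_ofReal_poissonPdf_mul {a b t : ℝ} (ha : 0 ≤ a) (hb : 0 ≤ b) (ht : 0 ≤ t) :
    ∑' k : ℕ × ℕ, ENNReal.ofReal (poissonPdf a k.1 * poissonPdf b k.2)
        * ENNReal.ofReal (k.1 * (t / ((k.2 : ℝ) + 1)) * b)
      = ENNReal.ofReal (t * a * (1 - Real.exp (-b))) := by
  have hA0 : ∀ n : ℕ, 0 ≤ poissonPdf a n * n :=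
    fun n => mul_nonneg (poissonPdf_nonneg ha n) n.cast_nonneg
  have hB0 : ∀ n : ℕ, 0 ≤ poissonPdf b n * (b / ((n : ℝ) + 1)) :=
    fun n => mul_nonneg (poissonPdf_nonneg hb n) (by positivity)
  have hA := hasSum_poissonPdf_mul_id a
  have hB := hasSum_poissonPdf_mul_div_succ b
  have hterm : ∀ k : ℕ × ℕ, ENNReal.ofReal (poissonPdf a k.1 * poissonPdf b k.2)
        * ENNReal.ofReal (k.1 * (t / ((k.2 : ℝ) + 1)) * b)
      = ENNReal.ofReal t * (ENNReal.ofReal (poissonPdf a k.1 * k.1)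
        * ENNReal.ofReal (poissonPdf b k.2 * (b / ((k.2 : ℝ) + 1)))) := by
    intro k
    rw [← ENNReal.ofReal_mul (hA0 _), ← ENNReal.ofReal_mul ht,
      ← ENNReal.ofReal_mul (mul_nonneg (poissonPdf_nonneg ha _) (poissonPdf_nonneg hb _))]
    congr 1
    ring
  simp_rw [hterm]
  rw [ENNReal.tsum_mul_left, ENNReal.tsum_prod']
  simp_rw [ENNReal.tsum_mul_left]
  rw [ENNReal.tsum_mul_right, ← ENNReal.ofReal_tsum_of_nonneg hA0 hA.summable,
    ← ENNReal.ofReal_tsum_of_nonneg hB0 hB.summable, hA.tsum_eq, hB.tsum_eq,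
    ← ENNReal.ofReal_mul ha, ← ENNReal.ofReal_mul ht, mul_assoc]

/-- moment identity from the proof of Lemma 6.4 of the paper, IRD
case: if `Z⁻, Z⁺` are conditionally independent Poisson with means `E[W⁺]W⁻/θ` and
`E[W⁻]W⁺/θ` given `(W⁻, W⁺, ζ)`, where `θ = E[W⁻ + W⁺]` and `|ζ| ≤ c ≤ 1`, then
`E[Z⁻ (|ζ|/(Z⁺+1)) W⁺] = (E[W⁺]/E[W⁻]) E[|ζ| W⁻ (1 − e^{−E[W⁻]W⁺/θ})] ≤ c E[W⁺]`;
in particular the size-biased vector `(𝒩, 𝒞)` of the IRD satisfies `E[𝒩|𝒞|] ≤ c`. -/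
theorem ird_size_biased_mean_identity
    {Ω : Type*} [MeasurableSpace Ω] (μ : Measure Ω) [IsProbabilityMeasure μ]
    (Wm Wp ζ : Ω → ℝ) (Zm Zp : Ω → ℕ)
    (hWm : Measurable Wm) (hWp : Measurable Wp) (hζ : Measurable ζ)
    (hZm : Measurable Zm) (hZp : Measurable Zp)
    (hWm0 : ∀ᵐ ω ∂μ, 0 ≤ Wm ω) (hWp0 : ∀ᵐ ω ∂μ, 0 ≤ Wp ω)
    (hWmInt : Integrable Wm μ) (hWpInt : Integrable Wp μ)
    (hWmPos : 0 < ∫ ω, Wm ω ∂μ) (hWpPos : 0 < ∫ ω, Wp ω ∂μ)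
    (c : ℝ) (hc0 : 0 < c) (hc1 : c ≤ 1)
    (hζbd : ∀ᵐ ω ∂μ, |ζ ω| ≤ c)
    (θ : ℝ) (hθ : θ = ∫ ω, (Wm ω + Wp ω) ∂μ)
    -- `Z⁻` and `Z⁺` are conditionally independent Poisson given `(W⁻, W⁺, ζ)`
    (hcond : ∀ (m n : ℕ) (s : Set (ℝ × ℝ × ℝ)), MeasurableSet s →
      (μ {ω | Zm ω = m ∧ Zp ω = n ∧ (Wm ω, Wp ω, ζ ω) ∈ s}).toReal
        = ∫ ω in {ω | (Wm ω, Wp ω, ζ ω) ∈ s},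
            poissonPdf ((∫ ω', Wp ω' ∂μ) * Wm ω / θ) m
              * poissonPdf ((∫ ω', Wm ω' ∂μ) * Wp ω / θ) n ∂μ) :
    (∫ ω, (Zm ω : ℝ) * (|ζ ω| / ((Zp ω : ℝ) + 1)) * Wp ω ∂μ)
        = (∫ ω, Wp ω ∂μ) / (∫ ω, Wm ω ∂μ)
          * ∫ ω, |ζ ω| * Wm ω * (1 - Real.exp (-((∫ ω', Wm ω' ∂μ) * Wp ω / θ))) ∂μ ∧
    (∫ ω, (Zm ω : ℝ) * (|ζ ω| / ((Zp ω : ℝ) + 1)) * Wp ω ∂μ) ≤ c * ∫ ω, Wp ω ∂μ ∧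
    (∫ ω, (Zm ω : ℝ) * (|ζ ω| / ((Zp ω : ℝ) + 1)) * Wp ω ∂μ) / (∫ ω, Wp ω ∂μ) ≤ c := by
  have hθ' : 0 < θ := by
    rw [hθ, integral_add hWmInt hWpInt]; positivity
  set p := ∫ ω, Wp ω ∂μ
  set q := ∫ ω, Wm ω ∂μ with hq
  have hV : Measurable fun ω => (Wm ω, Wp ω, ζ ω) := by fun_prop
  let d : ℕ × ℕ → Ω → ℝ := fun k ω => poissonPdf (p * Wm ω / θ) k.1 * poissonPdf (q * Wp ω / θ) k.2
  have hdm : ∀ k, Measurable (d k) := fun k =>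
    ((measurable_poissonPdf k.1).comp (by fun_prop)).mul
      ((measurable_poissonPdf k.2).comp (by fun_prop))
  have hd : ∀ k, ∀ᵐ ω ∂μ, 0 ≤ d k ω ∧ d k ω ≤ 1 := fun k => by
    filter_upwards [hWm0, hWp0] with ω h1 h2
    have ha : 0 ≤ p * Wm ω / θ := by positivity
    have hb : 0 ≤ q * Wp ω / θ := by positivity
    exact ⟨mul_nonneg (poissonPdf_nonneg ha _) (poissonPdf_nonneg hb _),
      mul_le_one₀ (poissonPdf_le_one ha _) (poissonPdf_nonneg hb _) (poissonPdf_le_one hb _)⟩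
  have hdi : ∀ k, Integrable (d k) μ := fun k => by
    refine Integrable.of_bound (hdm k).aestronglyMeasurable 1 ?_
    filter_upwards [hd k] with ω h
    rw [Real.norm_of_nonneg h.1]
    exact h.2
  let g : ℕ × ℕ → ℝ × ℝ × ℝ → ENNReal := fun k v =>
    ENNReal.ofReal (k.1 * (|v.2.2| / ((k.2 : ℝ) + 1)) * v.2.1)
  have hg : ∀ k, Measurable (g k) := fun k => by fun_prop
  have hZ : Measurable fun ω => (Zm ω, Zp ω) := hZm.prodMk hZp
  have hfib : ∀ k : ℕ × ℕ,
      ∫⁻ ω in (fun ω => (Zm ω, Zp ω)) ⁻¹' {k}, g k (Wm ω, Wp ω, ζ ω) ∂μ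
        = ∫⁻ ω, ENNReal.ofReal (d k ω) * g k (Wm ω, Wp ω, ζ ω) ∂μ := fun k => by
    refine setLIntegral_comp_eq_of_condDensity hV (hdm k) (hdi k)
      ((hd k).mono fun _ h => h.1) (fun s hs => ?_) (hg k)
    refine Eq.trans ?_ (hcond k.1 k.2 s hs)
    congr 2
    ext ω
    simp only [mem_inter_iff, mem_preimage, mem_singleton_iff, mem_ofPred_eq, Prod.ext_iff]
    tauto
  have hmain : (∫⁻ ω, ENNReal.ofReal ((Zm ω : ℝ) * (|ζ ω| / ((Zp ω : ℝ) + 1)) * Wp ω) ∂μ)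
      = ∫⁻ ω, ENNReal.ofReal
          (p / q * (|ζ ω| * Wm ω * (1 - Real.exp (-(q * Wp ω / θ))))) ∂μ := by
    rw [show (∫⁻ ω, ENNReal.ofReal ((Zm ω : ℝ) * (|ζ ω| / ((Zp ω : ℝ) + 1)) * Wp ω) ∂μ)
      = ∑' k, _ from lintegral_eq_tsum_fiber hZ (fun k ω => g k (Wm ω, Wp ω, ζ ω))
        fun k => (hg k).comp hV]
    simp_rw [hfib]
    refine (lintegral_tsum fun k =>
      ((hdm k).ennreal_ofReal.mul ((hg k).comp hV)).aemeasurable).symm.trans ?_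
    refine lintegral_congr_ae ?_
    filter_upwards [hWm0, hWp0] with ω h1 h2
    have hs := tsum_ofReal_poissonPdf_mul (a := p * Wm ω / θ) (b := q * Wp ω / θ)
      (t := |ζ ω| * (θ / q)) (by positivity) (by positivity) (by positivity)
    refine Eq.trans (tsum_congr fun k => ?_) (hs.trans (congrArg ENNReal.ofReal ?_))
    · refine congrArg (ENNReal.ofReal (d k ω) * ENNReal.ofReal ·) ?_
      field_simp
    · field_simp
  have hexp : ∀ᵐ ω ∂μ, 0 ≤ 1 - Real.exp (-(q * Wp ω / θ)) := by
    filter_upwards [hWp0] with ω h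
    rw [sub_nonneg, Real.exp_le_one_iff, neg_nonpos]
    positivity
  have hid : (∫ ω, (Zm ω : ℝ) * (|ζ ω| / ((Zp ω : ℝ) + 1)) * Wp ω ∂μ)
      = p / q * ∫ ω, |ζ ω| * Wm ω * (1 - Real.exp (-(q * Wp ω / θ))) ∂μ := by
    rw [← integral_const_mul, integral_eq_lintegral_of_nonneg_ae,
      integral_eq_lintegral_of_nonneg_ae, hmain]
    · filter_upwards [hWm0, hexp] with ω h1 h2
      simp only [Pi.zero_apply]
      positivity
    · exact Measurable.aestronglyMeasurable (by fun_prop)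
    · filter_upwards [hWp0] with ω h
      simp only [Pi.zero_apply]
      positivity
    · have : Measurable fun ω => (Zm ω : ℝ) := measurable_from_nat.comp hZm
      have : Measurable fun ω => (Zp ω : ℝ) := measurable_from_nat.comp hZp
      exact Measurable.aestronglyMeasurable (by fun_prop)
  have hle : (∫ ω, |ζ ω| * Wm ω * (1 - Real.exp (-(q * Wp ω / θ))) ∂μ) ≤ c * q := by
    rw [hq, ← integral_const_mul]
    refine integral_mono_of_nonneg ?_ (hWmInt.const_mul c) ?_
    · filter_upwards [hWm0, hexp] with ω h1 h2
      simp only [Pi.zero_apply]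
      positivity
    · filter_upwards [hWm0, hexp, hζbd] with ω h1 h2 h3
      calc |ζ ω| * Wm ω * (1 - Real.exp (-(q * Wp ω / θ)))
          ≤ |ζ ω| * Wm ω := mul_le_of_le_one_right (by positivity)
            (sub_le_self _ (Real.exp_pos _).le)
        _ ≤ c * Wm ω := by gcongr
  have hbd : (∫ ω, (Zm ω : ℝ) * (|ζ ω| / ((Zp ω : ℝ) + 1)) * Wp ω ∂μ) ≤ c * p := by
    rw [hid]
    calc p / q * ∫ ω, |ζ ω| * Wm ω * (1 - Real.exp (-(q * Wp ω / θ))) ∂μ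
        ≤ p / q * (c * q) := by gcongr
      _ = c * p := by field_simp
  exact ⟨hid, hbd, (div_le_iff₀ hWpPos).2 hbd⟩
end
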